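/- Let X = (X_1, X_2, …) be a sequence of ℝ^d-valued random vectors with partial sums S_n := X_1 + … + X_n, let A_n be invertible d×d real matrices and b_n ∈ ℝ^d, and assume: (i) X is strongly mixing; (ii) the triangular array (A_n X_j : 1 ≤ j ≤ n, n ≥ 1) is infinitesimal; (iii) the distributions of A_n S_n + b_n converge weakly to a full probability measure μ on ℝ^d. If for each n ∈ ℕ, m_n is an integer with 1 ≤ m_n ≤ n, then every limit point (limit along a subsequence) of the sequence of matrices (A_n A_{m_n}^{−1})_{n∈ℕ} belongs to the Urbanik decomposability semigroup D(μ). -/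

import Mathlib

open MeasureTheory Filter Topology Matrix

/-- Convolution of two Borel measures on `ℝ^d`. -/
noncomputable def mconv {d : ℕ} (μ ν : Measure (Fin d → ℝ)) : Measure (Fin d → ℝ) :=
  (μ.prod ν).map (fun p => p.1 + p.2)

/-- The Urbanik decomposability semigroup `D(μ)`: all matrices `A` such that
`μ = (A_*μ) ∗ ν` for some probability measure `ν`. -/
def UrbanikD {d : ℕ} (μ : Measure (Fin d → ℝ)) : Set (Matrix (Fin d) (Fin d) ℝ) :=
  {A | ∃ ν : Measure (Fin d → ℝ), IsProbabilityMeasure ν ∧ μ = mconv (μ.map A.mulVec) ν}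

/-- A measure on `ℝ^d` is full if its support is not contained in any hyperplane,
i.e. no translate `v + L` of a proper linear subspace `L` carries all of its mass. -/
def IsFull {d : ℕ} (μ : Measure (Fin d → ℝ)) : Prop :=
  ∀ (v : Fin d → ℝ) (L : Submodule ℝ (Fin d → ℝ)), L ≠ ⊤ → μ {x | x - v ∈ L} < 1

/-- Weak convergence of a sequence of measures on `ℝ^d`. -/
def WeakLim {d : ℕ} (μs : ℕ → Measure (Fin d → ℝ)) (μ : Measure (Fin d → ℝ)) : Prop :=
  ∀ f : BoundedContinuousFunction (Fin d → ℝ) ℝ,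
    Tendsto (fun n => ∫ x, f x ∂(μs n)) atTop (𝓝 (∫ x, f x ∂μ))

/-- Partial sums `S_n = X_1 + ... + X_n`. -/
def partialSum {Ω : Type*} {d : ℕ} (X : ℕ → Ω → (Fin d → ℝ)) (n : ℕ) (ω : Ω) :
    Fin d → ℝ :=
  ∑ j ∈ Finset.Icc 1 n, X j ω

/-- The triangular array `(A_n X_j : 1 ≤ j ≤ n, n ≥ 1)` is infinitesimal:
`sup_{1 ≤ j ≤ n} P(‖A_n X_j‖ ≥ ε) → 0` as `n → ∞`, for every `ε > 0`. -/
def Infinitesimal {Ω : Type*} [MeasurableSpace Ω] {d : ℕ} (P : Measure Ω)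
    (A : ℕ → Matrix (Fin d) (Fin d) ℝ) (X : ℕ → Ω → (Fin d → ℝ)) : Prop :=
  ∀ ε > (0 : ℝ), ∀ δ > (0 : ℝ), ∃ N : ℕ, ∀ n ≥ N, ∀ j : ℕ, 1 ≤ j → j ≤ n →
    (P {ω | ε ≤ ‖(A n).mulVec (X j ω)‖}).toReal < δ

/-- Rosenblatt's measure of dependence `α(𝒜, ℬ)` between two sub-σ-fields. -/
noncomputable def alphaSig {Ω : Type*} [MeasurableSpace Ω] (P : Measure Ω)
    (m₁ m₂ : MeasurableSpace Ω) : ℝ :=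
  sSup {r | ∃ A B : Set Ω, MeasurableSet[m₁] A ∧ MeasurableSet[m₂] B ∧
    r = |(P (A ∩ B)).toReal - (P A).toReal * (P B).toReal|}

/-- The strong mixing coefficient `α(X; n) = sup_{j ≥ 1} α(σ(X_k, 1 ≤ k ≤ j), σ(X_k, k ≥ j+n))`. -/
noncomputable def alphaMix {Ω : Type*} [MeasurableSpace Ω] {d : ℕ} (P : Measure Ω)
    (X : ℕ → Ω → (Fin d → ℝ)) (n : ℕ) : ℝ :=
  ⨆ j : {j : ℕ // 1 ≤ j}, alphaSig P
    (⨆ k ∈ Set.Icc 1 (j : ℕ), MeasurableSpace.comap (X k) inferInstance)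
    (⨆ k ∈ Set.Ici ((j : ℕ) + n), MeasurableSpace.comap (X k) inferInstance)

/-- The sequence `X = (X_1, X_2, ...)` is strongly mixing: `α(X; n) → 0`. -/
def StronglyMixing {Ω : Type*} [MeasurableSpace Ω] {d : ℕ} (P : Measure Ω)
    (X : ℕ → Ω → (Fin d → ℝ)) : Prop :=
  Tendsto (alphaMix P X) atTop (𝓝 0)

/-- A function whose integrals over all `m₁`-measurable sets are bounded by `c` pairs with
`m₁`-measurable functions valued in `[-1, 1]` to at most `2 * c`. -/
lemma abs_integral_mul_le_of_forall_setIntegral_le {Ω : Type*} {m₁ mΩ : MeasurableSpace Ω}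
    {P : Measure Ω} [IsProbabilityMeasure P] (hm₁ : m₁ ≤ mΩ) {f h : Ω → ℝ} {c : ℝ}
    (hf : Measurable[m₁] f) (hf1 : ∀ ω, |f ω| ≤ 1) (hh : Integrable h P)
    (hc : ∀ s, MeasurableSet[m₁] s → |∫ ω in s, h ω ∂P| ≤ c) :
    |∫ ω, f ω * h ω ∂P| ≤ 2 * c := by
  have hpull : P[f * h | m₁] =ᵐ[P] f * P[h | m₁] :=
    condExp_stronglyMeasurable_mul_of_bound hm₁ hf.stronglyMeasurable hh 1 (ae_of_all _ hf1)
  have hint : Integrable (P[h | m₁]) P := integrable_condExp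
  have hs : MeasurableSet[m₁] {ω | 0 ≤ (P[h | m₁]) ω} :=
    stronglyMeasurable_condExp.measurable measurableSet_Ici
  set s := {ω | 0 ≤ (P[h | m₁]) ω}
  calc |∫ ω, f ω * h ω ∂P| = |∫ ω, f ω * (P[h | m₁]) ω ∂P| := by
        rw [show (∫ ω, f ω * h ω ∂P) = ∫ ω, (f * h) ω ∂P from rfl, ← integral_condExp hm₁,
          integral_congr_ae hpull]
        rfl
    _ ≤ ∫ ω, |f ω * (P[h | m₁]) ω| ∂P := abs_integral_le_integral_abs
    _ ≤ ∫ ω, |(P[h | m₁]) ω| ∂P := by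
        refine integral_mono_of_nonneg (ae_of_all _ fun ω => abs_nonneg _) hint.abs
          (ae_of_all _ fun ω => ?_)
        simp only [abs_mul]
        exact mul_le_of_le_one_left (abs_nonneg _) (hf1 ω)
    _ = (∫ ω in s, |(P[h | m₁]) ω| ∂P) + ∫ ω in sᶜ, |(P[h | m₁]) ω| ∂P :=
        (integral_add_compl (hm₁ _ hs) hint.abs).symm
    _ = (∫ ω in s, h ω ∂P) + -∫ ω in sᶜ, h ω ∂P := by
        rw [← setIntegral_condExp hm₁ hh hs, ← setIntegral_condExp hm₁ hh hs.compl,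
          ← integral_neg]
        congr 1
        · exact setIntegral_congr_fun (hm₁ _ hs) fun ω hω => abs_of_nonneg hω
        · exact setIntegral_congr_fun (hm₁ _ hs.compl) fun ω hω =>
            abs_of_neg (not_le.mp hω)
    _ ≤ c + c := add_le_add (le_of_abs_le (hc s hs)) (neg_le.mp (abs_le.mp (hc _ hs.compl)).1)
    _ = 2 * c := by ring

/-- Covariance inequality for bounded functions measurable with respect to two weakly
dependent sub-σ-algebras. -/
lemma abs_integral_mul_sub_mul_integral_le {Ω : Type*} {m₁ m₂ mΩ : MeasurableSpace Ω}
    {P : Measure Ω} [IsProbabilityMeasure P] (hm₁ : m₁ ≤ mΩ) (hm₂ : m₂ ≤ mΩ) {f g : Ω → ℝ} {c : ℝ}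
    (hc : ∀ s t, MeasurableSet[m₁] s → MeasurableSet[m₂] t →
      |P.real (s ∩ t) - P.real s * P.real t| ≤ c)
    (hf : Measurable[m₁] f) (hf1 : ∀ ω, |f ω| ≤ 1)
    (hg : Measurable[m₂] g) (hg1 : ∀ ω, |g ω| ≤ 1) :
    |(∫ ω, f ω * g ω ∂P) - (∫ ω, f ω ∂P) * ∫ ω, g ω ∂P| ≤ 4 * c := by
  have hfm : Measurable f := hf.mono hm₁ le_rfl
  have hgm : Measurable g := hg.mono hm₂ le_rfl
  have hgi : Integrable g P := .of_bound hgm.aestronglyMeasurable 1 (ae_of_all _ hg1)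
  have hfi : Integrable f P := .of_bound hfm.aestronglyMeasurable 1 (ae_of_all _ hf1)
  have hfgi : Integrable (fun ω => f ω * g ω) P :=
    .of_bound (hfm.mul hgm).aestronglyMeasurable 1 (ae_of_all _ fun ω => by
      rw [Real.norm_eq_abs, abs_mul]
      exact mul_le_one₀ (hf1 ω) (abs_nonneg _) (hg1 ω))
  have hset : ∀ s, MeasurableSet[m₁] s → |∫ ω in s, (g ω - ∫ ω', g ω' ∂P) ∂P| ≤ 2 * c := by
    intro s hs
    have hsm := hm₁ _ hs
    have hind : Integrable (s.indicator (fun _ => (1 : ℝ))) P :=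
      (integrable_const 1).indicator hsm
    have hgind : Integrable (fun ω => g ω * s.indicator (fun _ => (1 : ℝ)) ω) P := by
      refine (hgi.indicator hsm).congr (ae_of_all _ fun ω => ?_)
      by_cases hω : ω ∈ s <;> simp [hω]
    have key := abs_integral_mul_le_of_forall_setIntegral_le hm₂ hg hg1
      (h := fun ω => s.indicator (fun _ => (1 : ℝ)) ω - P.real s) (c := c) (P := P)
      (hind.sub (integrable_const _)) (fun t ht => by
        have htm := hm₂ _ ht
        rw [integral_sub hind.integrableOn (integrable_const _), setIntegral_indicator hsm]
        simp only [integral_const, smul_eq_mul, mul_one, measureReal_restrict_apply_univ]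
        rw [Set.inter_comm, mul_comm]
        exact hc s t hs ht)
    convert key using 2
    simp only [mul_sub]
    rw [integral_sub hgi.integrableOn (integrable_const _),
      integral_sub hgind (hgi.mul_const _), integral_mul_const]
    simp only [integral_const, smul_eq_mul, measureReal_restrict_apply_univ]
    rw [← integral_indicator hsm, mul_comm]
    congr 1
    refine integral_congr_ae (ae_of_all _ fun ω => ?_)
    by_cases hω : ω ∈ s <;> simp [hω]
  have key := abs_integral_mul_le_of_forall_setIntegral_le hm₁ hf hf1
    (hgi.sub (integrable_const _)) hset
  calc _ = |∫ ω, f ω * (g ω - ∫ ω', g ω' ∂P) ∂P| := by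
        simp only [mul_sub]
        rw [integral_sub hfgi (hfi.mul_const _), integral_mul_const]
    _ ≤ 2 * (2 * c) := key
    _ = 4 * c := by ring

/-- Integrability of a unimodular exponential. -/
lemma integrable_exp_ofReal_mul_I {Ω : Type*} [MeasurableSpace Ω] {P : Measure Ω}
    [IsFiniteMeasure P] {f : Ω → ℝ} (hf : Measurable f) :
    Integrable (fun ω => Complex.exp (f ω * Complex.I)) P :=
  .of_bound (by fun_prop) 1 (ae_of_all _ fun ω => (Complex.norm_exp_ofReal_mul_I _).le)

/-- Approximate multiplicativity of characteristic functions under weak dependence. -/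
lemma norm_integral_exp_add_sub_mul_le {Ω : Type*} {m₁ m₂ mΩ : MeasurableSpace Ω}
    {P : Measure Ω} [IsProbabilityMeasure P] (hm₁ : m₁ ≤ mΩ) (hm₂ : m₂ ≤ mΩ) {u v : Ω → ℝ} {c : ℝ}
    (hc : ∀ s t, MeasurableSet[m₁] s → MeasurableSet[m₂] t →
      |P.real (s ∩ t) - P.real s * P.real t| ≤ c)
    (hu : Measurable[m₁] u) (hv : Measurable[m₂] v) :
    ‖(∫ ω, Complex.exp ((u ω + v ω : ℝ) * Complex.I) ∂P) -
      (∫ ω, Complex.exp (u ω * Complex.I) ∂P) * ∫ ω, Complex.exp (v ω * Complex.I) ∂P‖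
      ≤ 16 * c := by
  have hum : Measurable u := hu.mono hm₁ le_rfl
  have hvm : Measurable v := hv.mono hm₂ le_rfl
  have hcos {w : Ω → ℝ} (hw : Measurable w) : Integrable (fun ω => Real.cos (w ω)) P :=
    .of_bound (by fun_prop) 1 (ae_of_all _ fun ω => Real.abs_cos_le_one _)
  have hsin {w : Ω → ℝ} (hw : Measurable w) : Integrable (fun ω => Real.sin (w ω)) P :=
    .of_bound (by fun_prop) 1 (ae_of_all _ fun ω => Real.abs_sin_le_one _)
  have hexp {w : Ω → ℝ} (hw : Measurable w) : (∫ ω, Complex.exp (w ω * Complex.I) ∂P) =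
      (∫ ω, Real.cos (w ω) ∂P : ℝ) + (∫ ω, Real.sin (w ω) ∂P : ℝ) * Complex.I := by
    simp_rw [Complex.exp_mul_I, ← Complex.ofReal_cos, ← Complex.ofReal_sin]
    rw [integral_add (hcos hw).ofReal ((hsin hw).ofReal.mul_const _), integral_mul_const,
      integral_complex_ofReal, integral_complex_ofReal]
  have hmul {f g : Ω → ℝ} (hf : Measurable f) (hg : Measurable g) (hf1 : ∀ ω, |f ω| ≤ 1)
      (hg1 : ∀ ω, |g ω| ≤ 1) : Integrable (fun ω => f ω * g ω) P :=
    .of_bound (hf.mul hg).aestronglyMeasurable 1 (ae_of_all _ fun ω => by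
      rw [Real.norm_eq_abs, abs_mul]
      exact mul_le_one₀ (hf1 ω) (abs_nonneg _) (hg1 ω))
  have c1 : ∀ {w : Ω → ℝ} (ω), |Real.cos (w ω)| ≤ 1 := fun ω => Real.abs_cos_le_one _
  have s1 : ∀ {w : Ω → ℝ} (ω), |Real.sin (w ω)| ≤ 1 := fun ω => Real.abs_sin_le_one _
  have hcu := Real.measurable_cos.comp hu
  have hsu := Real.measurable_sin.comp hu
  have hcv := Real.measurable_cos.comp hv
  have hsv := Real.measurable_sin.comp hv
  have hcc := abs_integral_mul_sub_mul_integral_le hm₁ hm₂ hc hcu c1 hcv c1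
  have hcs := abs_integral_mul_sub_mul_integral_le hm₁ hm₂ hc hcu c1 hsv s1
  have hsc := abs_integral_mul_sub_mul_integral_le hm₁ hm₂ hc hsu s1 hcv c1
  have hss := abs_integral_mul_sub_mul_integral_le hm₁ hm₂ hc hsu s1 hsv s1
  simp only [Function.comp_apply] at hcc hcs hsc hss
  rw [hexp (hum.fun_add hvm), hexp hum, hexp hvm]
  simp only [Real.cos_add, Real.sin_add]
  rw [integral_sub (hmul (by fun_prop) (by fun_prop) c1 c1) (hmul (by fun_prop) (by fun_prop) s1 s1),
    integral_add (hmul (by fun_prop) (by fun_prop) s1 c1) (hmul (by fun_prop) (by fun_prop) c1 s1)]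
  refine (Complex.norm_le_abs_re_add_abs_im _).trans ?_
  simp only [Complex.sub_re, Complex.sub_im, Complex.add_re, Complex.add_im, Complex.mul_re,
    Complex.mul_im, Complex.ofReal_re, Complex.ofReal_im, Complex.I_re, Complex.I_im]
  rw [abs_le] at hcc hcs hsc hss
  have hre : ∀ x y : ℝ, |x| ≤ 8 * c → |y| ≤ 8 * c → |x| + |y| ≤ 16 * c := by
    intro x y hx hy; linarith
  apply hre <;> rw [abs_le] <;> constructor <;> linarith

/-- Subadditivity of `w ↦ ‖exp (i w) - 1‖` along finite sums. -/
lemma norm_exp_sum_mul_I_sub_one_le {ι : Type*} (s : Finset ι) (w : ι → ℝ) :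
    ‖Complex.exp ((∑ j ∈ s, w j : ℝ) * Complex.I) - 1‖ ≤
      ∑ j ∈ s, ‖Complex.exp (w j * Complex.I) - 1‖ := by
  classical
  induction s using Finset.induction_on with
  | empty => simp
  | insert a s ha ih =>
    rw [Finset.sum_insert ha, Finset.sum_insert ha, Complex.ofReal_add, add_mul, Complex.exp_add]
    calc _ = ‖Complex.exp (w a * Complex.I) *
          (Complex.exp ((∑ j ∈ s, w j : ℝ) * Complex.I) - 1) +
          (Complex.exp (w a * Complex.I) - 1)‖ := by ring_nf
      _ ≤ ‖Complex.exp ((∑ j ∈ s, w j : ℝ) * Complex.I) - 1‖ +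
          ‖Complex.exp (w a * Complex.I) - 1‖ := by
        refine (norm_add_le _ _).trans ?_
        rw [norm_mul, Complex.norm_exp_ofReal_mul_I, one_mul]
      _ ≤ _ := by linarith

/-- Approximate multiplicativity of characteristic functions when a small term `w` separates
the two weakly dependent terms. -/
lemma norm_integral_exp_add_add_sub_mul_le {Ω : Type*} {m₁ m₂ mΩ : MeasurableSpace Ω}
    {P : Measure Ω} [IsProbabilityMeasure P] (hm₁ : m₁ ≤ mΩ) (hm₂ : m₂ ≤ mΩ)
    {u w v : Ω → ℝ} {c : ℝ}
    (hc : ∀ s t, MeasurableSet[m₁] s → MeasurableSet[m₂] t →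
      |P.real (s ∩ t) - P.real s * P.real t| ≤ c)
    (hu : Measurable[m₁] u) (hw : Measurable w) (hv : Measurable[m₂] v) :
    ‖(∫ ω, Complex.exp ((u ω + (w ω + v ω) : ℝ) * Complex.I) ∂P) -
      (∫ ω, Complex.exp (u ω * Complex.I) ∂P) *
        ∫ ω, Complex.exp ((w ω + v ω : ℝ) * Complex.I) ∂P‖
      ≤ 2 * (∫ ω, ‖Complex.exp (w ω * Complex.I) - 1‖ ∂P) + 16 * c := by
  have hum : Measurable u := hu.mono hm₁ le_rfl
  have hvm : Measurable v := hv.mono hm₂ le_rfl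
  have hwi : Integrable (fun ω => ‖Complex.exp (w ω * Complex.I) - 1‖) P :=
    ((integrable_exp_ofReal_mul_I hw).sub (integrable_const _)).norm
  have hpert {z : Ω → ℝ} (hz : Measurable z) :
      ‖(∫ ω, Complex.exp ((w ω + z ω : ℝ) * Complex.I) ∂P) -
        ∫ ω, Complex.exp (z ω * Complex.I) ∂P‖ ≤
        ∫ ω, ‖Complex.exp (w ω * Complex.I) - 1‖ ∂P := by
    rw [← integral_sub (integrable_exp_ofReal_mul_I (hw.fun_add hz)) (integrable_exp_ofReal_mul_I hz)]
    refine norm_integral_le_of_norm_le hwi (ae_of_all _ fun ω => ?_)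
    rw [Complex.ofReal_add, add_mul, Complex.exp_add, ← sub_one_mul, norm_mul,
      Complex.norm_exp_ofReal_mul_I, mul_one]
  have h₁ := hpert (hum.fun_add hvm)
  have h₂ := hpert hvm
  have h₃ := norm_integral_exp_add_sub_mul_le hm₁ hm₂ hc hu hv
  have h₄ : ‖∫ ω, Complex.exp (u ω * Complex.I) ∂P‖ ≤ 1 := by
    refine (norm_integral_le_integral_norm _).trans ?_
    simp [Complex.norm_exp_ofReal_mul_I]
  simp only [show ∀ ω, u ω + (w ω + v ω) = w ω + (u ω + v ω) from fun ω => by ring]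
  set I₁ := ∫ ω, Complex.exp ((w ω + (u ω + v ω) : ℝ) * Complex.I) ∂P
  set I₂ := ∫ ω, Complex.exp ((u ω + v ω : ℝ) * Complex.I) ∂P
  set J₁ := ∫ ω, Complex.exp ((w ω + v ω : ℝ) * Complex.I) ∂P
  set J₂ := ∫ ω, Complex.exp (v ω * Complex.I) ∂P
  set K := ∫ ω, Complex.exp (u ω * Complex.I) ∂P
  have h₅ : ‖K * (J₁ - J₂)‖ ≤ ∫ ω, ‖Complex.exp (w ω * Complex.I) - 1‖ ∂P := by
    rw [norm_mul]
    exact (mul_le_of_le_one_left (norm_nonneg _) h₄).trans h₂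
  calc ‖I₁ - K * J₁‖ = ‖(I₁ - I₂) + (I₂ - K * J₂) - K * (J₁ - J₂)‖ := by ring_nf
    _ ≤ ‖I₁ - I₂‖ + ‖I₂ - K * J₂‖ + ‖K * (J₁ - J₂)‖ :=
      (norm_sub_le _ _).trans (by gcongr; exact norm_add_le _ _)
    _ ≤ _ := by linarith

/-- If `|w| < ε` outside a set of probability at most `δ`, then `‖exp (i w) - 1‖` has small mean. -/
lemma integral_norm_exp_mul_I_sub_one_le {Ω : Type*} [MeasurableSpace Ω] {P : Measure Ω}
    [IsProbabilityMeasure P] {w : Ω → ℝ} (hw : Measurable w) {ε : ℝ} (hε : 0 ≤ ε) :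
    ∫ ω, ‖Complex.exp (w ω * Complex.I) - 1‖ ∂P ≤ ε + 2 * P.real {ω | ε ≤ |w ω|} := by
  have hs : MeasurableSet {ω | ε ≤ |w ω|} := measurableSet_le measurable_const hw.abs
  have hind : Integrable ({ω | ε ≤ |w ω|}.indicator (fun _ => (2 : ℝ))) P :=
    (integrable_const 2).indicator hs
  calc _ ≤ ∫ ω, (ε + {ω | ε ≤ |w ω|}.indicator (fun _ => (2 : ℝ)) ω) ∂P := by
        refine integral_mono ((integrable_exp_ofReal_mul_I hw).sub (integrable_const _)).norm
          ((integrable_const _).add hind) fun ω => ?_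
        by_cases hω : ε ≤ |w ω|
        · rw [Set.indicator_of_mem (by exact hω)]
          have := norm_sub_le (Complex.exp (w ω * Complex.I)) 1
          rw [Complex.norm_exp_ofReal_mul_I, norm_one] at this
          linarith
        · rw [Set.indicator_of_notMem (by exact hω), add_zero, mul_comm]
          exact Real.norm_exp_I_mul_ofReal_sub_one_le.trans (not_le.mp hω).le
    _ = _ := by
        rw [integral_add (integrable_const _) hind, integral_indicator hs]
        simp [mul_comm]

/-- The strong mixing coefficient bounds the dependence of past and future events. -/
lemma abs_measureReal_inter_sub_mul_le_alphaMix {Ω : Type*} [mΩ : MeasurableSpace Ω] {d : ℕ}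
    (P : Measure Ω) [IsProbabilityMeasure P] (X : ℕ → Ω → (Fin d → ℝ)) {j : ℕ} (hj : 1 ≤ j) (n : ℕ)
    (s t : Set Ω)
    (hs : MeasurableSet[⨆ k ∈ Set.Icc 1 j, MeasurableSpace.comap (X k) inferInstance] s)
    (ht : MeasurableSet[⨆ k ∈ Set.Ici (j + n), MeasurableSpace.comap (X k) inferInstance] t) :
    |P.real (s ∩ t) - P.real s * P.real t| ≤ alphaMix P X n := by
  have hle : ∀ s t : Set Ω, |(P (s ∩ t)).toReal - (P s).toReal * (P t).toReal| ≤ 1 := by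
    intro s t
    have h₁ : P.real (s ∩ t) ≤ 1 := measureReal_le_one
    have h₂ : P.real s ≤ 1 := measureReal_le_one
    have h₃ : P.real t ≤ 1 := measureReal_le_one
    have h₄ : P.real s * P.real t ≤ 1 := mul_le_one₀ h₂ measureReal_nonneg h₃
    have h₅ : 0 ≤ P.real s * P.real t := mul_nonneg measureReal_nonneg measureReal_nonneg
    have h₆ : 0 ≤ P.real (s ∩ t) := measureReal_nonneg
    change |P.real (s ∩ t) - P.real s * P.real t| ≤ 1
    rw [abs_le]
    constructor <;> linarith
  have hsig : ∀ m₁ m₂ : MeasurableSpace Ω, @alphaSig Ω mΩ P m₁ m₂ ≤ 1 := fun m₁ m₂ =>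
    csSup_le ⟨_, ∅, ∅, @MeasurableSet.empty _ m₁, @MeasurableSet.empty _ m₂, rfl⟩
      (by rintro _ ⟨s, t, -, -, rfl⟩; exact hle s t)
  calc |P.real (s ∩ t) - P.real s * P.real t|
      ≤ alphaSig P (⨆ k ∈ Set.Icc 1 j, MeasurableSpace.comap (X k) inferInstance)
          (⨆ k ∈ Set.Ici (j + n), MeasurableSpace.comap (X k) inferInstance) :=
        le_csSup ⟨1, by rintro _ ⟨s, t, -, -, rfl⟩; exact hle s t⟩ ⟨s, t, hs, ht, rfl⟩
    _ ≤ alphaMix P X n :=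
        le_ciSup (f := fun j : {j : ℕ // 1 ≤ j} => alphaSig P
          (⨆ k ∈ Set.Icc 1 (j : ℕ), MeasurableSpace.comap (X k) inferInstance)
          (⨆ k ∈ Set.Ici ((j : ℕ) + n), MeasurableSpace.comap (X k) inferInstance))
          ⟨1, by rintro _ ⟨j, rfl⟩; exact hsig _ _⟩ ⟨j, hj⟩

/-- Finite sums of the `X k` with `k ∈ T` are measurable with respect to the σ-algebra
generated by those `X k`. -/
lemma measurable_sum_iSup_comap {Ω : Type*} {d : ℕ} (X : ℕ → Ω → (Fin d → ℝ)) (s : Finset ℕ)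
    (T : Set ℕ) (hs : ∀ k ∈ s, k ∈ T) :
    Measurable[⨆ k ∈ T, MeasurableSpace.comap (X k) inferInstance] (fun ω => ∑ k ∈ s, X k ω) := by
  refine Finset.measurable_sum s fun k hk => ?_
  exact (comap_measurable (X k)).mono (le_iSup₂_of_le k (hs k hk) le_rfl) le_rfl

lemma iSup_comap_le {Ω : Type*} [MeasurableSpace Ω] {d : ℕ} {X : ℕ → Ω → (Fin d → ℝ)}
    (hX : ∀ j, Measurable (X j)) (T : Set ℕ) :
    (⨆ k ∈ T, MeasurableSpace.comap (X k) inferInstance) ≤ ‹MeasurableSpace Ω› :=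
  iSup₂_le fun k _ => (hX k).comap_le

/-- Weak convergence of the laws of random vectors as convergence in distribution. -/
lemma WeakLim.tendstoInDistribution {Ω : Type*} [MeasurableSpace Ω] {d : ℕ} {P : Measure Ω}
    [IsProbabilityMeasure P] {Y : ℕ → Ω → (Fin d → ℝ)} (hY : ∀ n, Measurable (Y n))
    {μ : Measure (Fin d → ℝ)} [IsProbabilityMeasure μ] (h : WeakLim (fun n => P.map (Y n)) μ) :
    TendstoInDistribution Y atTop id (fun _ => P) μ where
  forall_aemeasurable n := (hY n).aemeasurable
  tendsto := by
    refine ProbabilityMeasure.tendsto_iff_forall_integral_tendsto.mpr fun f => ?_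
    simpa using h f

/-- Convergence in distribution passes to subsequences. -/
lemma MeasureTheory.TendstoInDistribution.comp_tendsto {Ω Ω' E ι κ : Type*} [MeasurableSpace Ω]
    [MeasurableSpace Ω'] [TopologicalSpace E] [MeasurableSpace E] [OpensMeasurableSpace E]
    {P : Measure Ω} [IsProbabilityMeasure P] {Q : Measure Ω'} [IsProbabilityMeasure Q]
    {Y : ι → Ω → E} {Z : Ω' → E} {l : Filter ι} {l' : Filter κ}
    (h : TendstoInDistribution Y l Z (fun _ => P) Q) {n : κ → ι} (hn : Tendsto n l' l) :
    TendstoInDistribution (fun k => Y (n k)) l' Z (fun _ => P) Q where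
  forall_aemeasurable _ := h.forall_aemeasurable _
  aemeasurable_limit := h.aemeasurable_limit
  tendsto := h.tendsto.comp hn

/-- Slutsky's theorem for a deterministic sequence of parameters. -/
lemma MeasureTheory.TendstoInDistribution.continuous_comp_prodMk_const {Ω Ω' E E' F : Type*}
    [MeasurableSpace Ω] [MeasurableSpace Ω'] [SeminormedAddCommGroup E] [SecondCountableTopology E]
    [MeasurableSpace E] [BorelSpace E] [SeminormedAddCommGroup E'] [SecondCountableTopology E']
    [MeasurableSpace E'] [BorelSpace E'] [TopologicalSpace F] [MeasurableSpace F] [BorelSpace F]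
    {P : Measure Ω} [IsProbabilityMeasure P] {Q : Measure Ω'} [IsProbabilityMeasure Q]
    {Y : ℕ → Ω → E} {Z : Ω' → E} (h : TendstoInDistribution Y atTop Z (fun _ => P) Q)
    {g : E × E' → F} (hg : Continuous g) {y : ℕ → E'} {c : E'} (hy : Tendsto y atTop (𝓝 c)) :
    TendstoInDistribution (fun n ω => g (Y n ω, y n)) atTop (fun ω => g (Z ω, c))
      (fun _ => P) Q :=
  h.continuous_comp_prodMk_of_tendstoInMeasure_const hg
    (tendstoInMeasure_of_tendsto_ae (f := fun n _ => y n) (g := fun _ => c)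
      (fun _ => aestronglyMeasurable_const) (ae_of_all _ fun _ => hy))
    (fun _ => aemeasurable_const)

/-- Convergence in distribution gives convergence of characteristic functions. -/
lemma MeasureTheory.TendstoInDistribution.tendsto_integral_exp {Ω Ω' E : Type*}
    [MeasurableSpace Ω] [MeasurableSpace Ω'] [NormedAddCommGroup E] [NormedSpace ℝ E]
    [MeasurableSpace E] [BorelSpace E] {P : Measure Ω} [IsProbabilityMeasure P]
    {Q : Measure Ω'} [IsProbabilityMeasure Q] {Y : ℕ → Ω → E} {Z : Ω' → E}
    (h : TendstoInDistribution Y atTop Z (fun _ => P) Q) (L : StrongDual ℝ E) :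
    Tendsto (fun n => ∫ ω, Complex.exp (L (Y n ω) * Complex.I) ∂P) atTop
      (𝓝 (charFunDual (Q.map Z) L)) := by
  have hcont : Continuous fun x : E => Complex.exp (L x * Complex.I) := by fun_prop
  have := (ProbabilityMeasure.tendsto_iff_forall_integral_rclike_tendsto ℂ).mp h.tendsto
    (BoundedContinuousFunction.ofNormedAddCommGroup (fun x : E => Complex.exp (L x * Complex.I))
      hcont 1 fun x => (Complex.norm_exp_ofReal_mul_I _).le)
  refine this.congr fun n => ?_
  exact integral_map (h.forall_aemeasurable n) hcont.stronglyMeasurable.aestronglyMeasurable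

/-- Laws of a sequence converging in distribution form a tight set. -/
lemma MeasureTheory.TendstoInDistribution.isTightMeasureSet_range {Ω Ω' E : Type*}
    [MeasurableSpace Ω] [MeasurableSpace Ω'] [NormedAddCommGroup E] [SecondCountableTopology E]
    [CompleteSpace E] [MeasurableSpace E] [BorelSpace E] {P : Measure Ω} [IsProbabilityMeasure P]
    {Q : Measure Ω'} [IsProbabilityMeasure Q] {Y : ℕ → Ω → E} {Z : Ω' → E}
    (h : TendstoInDistribution Y atTop Z (fun _ => P) Q) :
    IsTightMeasureSet (Set.range fun n => P.map (Y n)) := by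
  have hc := h.tendsto.isCompact_insert_range
  refine (isTightMeasureSet_of_isCompact_closure (hc.closure_of_subset
    (Set.subset_insert _ _))).subset ?_
  rintro _ ⟨n, rfl⟩
  exact ⟨_, ⟨n, rfl⟩, rfl⟩

/-- The difference of two sequences converging in distribution converges in distribution along
a subsequence. -/
lemma MeasureTheory.TendstoInDistribution.exists_subseq_tendstoInDistribution_sub
    {Ω Ω₁ Ω₂ E : Type*} [MeasurableSpace Ω] [MeasurableSpace Ω₁] [MeasurableSpace Ω₂]
    [NormedAddCommGroup E] [SecondCountableTopology E]
    [CompleteSpace E] [MeasurableSpace E] [BorelSpace E] {P : Measure Ω} [IsProbabilityMeasure P]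
    {Q₁ : Measure Ω₁} [IsProbabilityMeasure Q₁] {Q₂ : Measure Ω₂} [IsProbabilityMeasure Q₂]
    {Y U : ℕ → Ω → E} {Z₁ : Ω₁ → E} {Z₂ : Ω₂ → E}
    (hY : TendstoInDistribution Y atTop Z₁ (fun _ => P) Q₁)
    (hU : TendstoInDistribution U atTop Z₂ (fun _ => P) Q₂) :
    ∃ (ν : ProbabilityMeasure E) (ψ : ℕ → ℕ), StrictMono ψ ∧
      TendstoInDistribution (fun k ω => Y (ψ k) ω - U (ψ k) ω) atTop id (fun _ => P)
        (ν : Measure E) := by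
  have hmeas n : AEMeasurable (fun ω => Y n ω - U n ω) P :=
    (hY.forall_aemeasurable n).sub (hU.forall_aemeasurable n)
  let ρ : ℕ → ProbabilityMeasure E := fun n =>
    ⟨P.map (fun ω => Y n ω - U n ω), Measure.isProbabilityMeasure_map (hmeas n)⟩
  have htight : IsTightMeasureSet {((κ : ProbabilityMeasure E) : Measure E) | κ ∈ Set.range ρ} := by
    have hYt := hY.isTightMeasureSet_range
    have hUt := hU.isTightMeasureSet_range
    rw [isTightMeasureSet_iff_exists_isCompact_measure_compl_le] at hYt hUt ⊢
    intro ε hε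
    obtain ⟨K₁, hK₁, h₁⟩ := hYt (ε / 2) (ENNReal.half_pos hε.ne')
    obtain ⟨K₂, hK₂, h₂⟩ := hUt (ε / 2) (ENNReal.half_pos hε.ne')
    have hK := (hK₁.prod hK₂).image (continuous_fst.sub continuous_snd)
    refine ⟨_, hK, ?_⟩
    rintro _ ⟨_, ⟨n, rfl⟩, rfl⟩
    change P.map (fun ω => Y n ω - U n ω) _ ≤ ε
    rw [Measure.map_apply_of_aemeasurable (hmeas n) hK.measurableSet.compl]
    have h₁' := h₁ _ ⟨n, rfl⟩
    have h₂' := h₂ _ ⟨n, rfl⟩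
    rw [Measure.map_apply_of_aemeasurable (hY.forall_aemeasurable n)
      hK₁.measurableSet.compl] at h₁'
    rw [Measure.map_apply_of_aemeasurable (hU.forall_aemeasurable n)
      hK₂.measurableSet.compl] at h₂'
    calc _ ≤ P (Y n ⁻¹' K₁ᶜ ∪ U n ⁻¹' K₂ᶜ) := by
          refine measure_mono fun ω hω => ?_
          by_contra hcon
          simp only [Set.mem_union, Set.mem_preimage, Set.mem_compl_iff, not_or, not_not] at hcon
          exact hω ⟨(Y n ω, U n ω), ⟨hcon.1, hcon.2⟩, rfl⟩
      _ ≤ ε / 2 + ε / 2 := (measure_union_le _ _).trans (add_le_add h₁' h₂')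
      _ = ε := ENNReal.add_halves ε
  obtain ⟨ν, -, ψ, hψ, hlim⟩ := (isCompact_closure_of_isTightMeasureSet htight).isSeqCompact
    (x := ρ) (fun n => subset_closure ⟨n, rfl⟩)
  refine ⟨ν, ψ, hψ, ⟨fun k => hmeas _, aemeasurable_id, ?_⟩⟩
  simp only [Measure.map_id]
  exact hlim

/-- If random variables that are almost surely constant converge in distribution, then the
limit is almost surely constant. -/
lemma MeasureTheory.TendstoInDistribution.exists_ae_eq_const {Ω Ω' : Type*}
    [MeasurableSpace Ω] [MeasurableSpace Ω'] {P : Measure Ω} [IsProbabilityMeasure P]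
    {Q : Measure Ω'} [IsProbabilityMeasure Q] {Y : ℕ → Ω → ℝ} {Z : Ω' → ℝ}
    (h : TendstoInDistribution Y atTop Z (fun _ => P) Q) (c : ℕ → ℝ)
    (hc : ∀ n, ∀ᵐ ω ∂P, Y n ω = c n) : ∃ a, ∀ᵐ ω ∂Q, Z ω = a := by
  have hlim : ∀ f : ℝ → ℝ, Continuous f → ∀ C, (∀ x, |f x| ≤ C) →
      Tendsto (fun n => f (c n)) atTop (𝓝 (∫ ω, f (Z ω) ∂Q)) := by
    intro f hf C hC
    have := ProbabilityMeasure.tendsto_iff_forall_integral_tendsto.mp h.tendsto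
      (BoundedContinuousFunction.ofNormedAddCommGroup f hf C hC)
    simp only [ProbabilityMeasure.coe_mk, BoundedContinuousFunction.coe_ofNormedAddCommGroup]
      at this
    rw [integral_map h.aemeasurable_limit hf.stronglyMeasurable.aestronglyMeasurable] at this
    refine this.congr fun n => ?_
    rw [integral_map (h.forall_aemeasurable n) hf.stronglyMeasurable.aestronglyMeasurable,
      integral_congr_ae ((hc n).mono fun ω hω => by simp only [hω]; rfl)]
    simp
  have hat : ∀ x, |Real.arctan x| ≤ Real.pi / 2 := fun x =>
    abs_le.mpr ⟨(Real.neg_pi_div_two_lt_arctan x).le, (Real.arctan_lt_pi_div_two x).le⟩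
  have h₁ := hlim Real.arctan Real.continuous_arctan _ hat
  have h₂ := hlim (fun x => Real.arctan x ^ 2) (Real.continuous_arctan.pow 2) ((Real.pi / 2) ^ 2)
    fun x => by rw [abs_pow]; exact pow_le_pow_left₀ (abs_nonneg _) (hat x) 2
  have hmem : MemLp (fun ω => Real.arctan (Z ω)) 2 Q :=
    MemLp.of_bound (Real.measurable_arctan.comp_aemeasurable
      h.aemeasurable_limit).aestronglyMeasurable _ (ae_of_all _ fun ω => hat _)
  have hvar : ProbabilityTheory.variance (fun ω => Real.arctan (Z ω)) Q = 0 := by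
    rw [ProbabilityTheory.variance_eq_sub hmem, sub_eq_zero]
    exact tendsto_nhds_unique h₂ (h₁.pow 2)
  refine ⟨Real.tan (∫ ω, Real.arctan (Z ω) ∂Q), ?_⟩
  filter_upwards [ProbabilityTheory.ae_eq_integral_of_variance_eq_zero hmem hvar] with ω hω
  rw [← hω, Real.tan_arctan]

/-- For an infinitesimal array, `exp (i L (A_n X_j))` is uniformly close to `1` in mean. -/
lemma Infinitesimal.exists_integral_norm_exp_sub_one_le {Ω : Type*} [MeasurableSpace Ω] {d : ℕ}
    {P : Measure Ω} [IsProbabilityMeasure P] {A : ℕ → Matrix (Fin d) (Fin d) ℝ}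
    {X : ℕ → Ω → (Fin d → ℝ)} (hX : ∀ j, Measurable (X j)) (hinf : Infinitesimal P A X)
    (L : StrongDual ℝ (Fin d → ℝ)) {η : ℝ} (hη : 0 < η) :
    ∃ N : ℕ, ∀ n ≥ N, ∀ j : ℕ, 1 ≤ j → j ≤ n →
      ∫ ω, ‖Complex.exp (L ((A n).mulVec (X j ω)) * Complex.I) - 1‖ ∂P ≤ η := by
  have hL : 0 < ‖L‖ + 1 := by positivity
  obtain ⟨N, hN⟩ := hinf (η / 2 / (‖L‖ + 1)) (by positivity) (η / 4) (by positivity)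
  refine ⟨N, fun n hn j hj hjn => ?_⟩
  have hmeas : Measurable fun ω => L ((A n).mulVec (X j ω)) := by
    have : Continuous fun x => L ((A n).mulVec x) := by fun_prop
    exact this.measurable.comp (hX j)
  have hsmall : P.real {ω | η / 2 ≤ |L ((A n).mulVec (X j ω))|} ≤ η / 4 := by
    refine (measureReal_mono fun ω hω => ?_).trans (hN n hn j hj hjn).le
    simp only [Set.mem_ofPred_eq] at hω ⊢
    rw [div_le_iff₀ hL]
    calc η / 2 ≤ ‖L ((A n).mulVec (X j ω))‖ := hω
      _ ≤ ‖L‖ * ‖(A n).mulVec (X j ω)‖ := L.le_opNorm _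
      _ ≤ ‖(A n).mulVec (X j ω)‖ * (‖L‖ + 1) := by nlinarith [norm_nonneg ((A n).mulVec (X j ω))]
  have := integral_norm_exp_mul_I_sub_one_le (P := P) hmeas (half_pos hη).le
  linarith

lemma measurable_partialSum {Ω : Type*} [MeasurableSpace Ω] {d : ℕ} {X : ℕ → Ω → (Fin d → ℝ)}
    (hX : ∀ j, Measurable (X j)) (n : ℕ) : Measurable (partialSum X n) :=
  Finset.measurable_sum _ fun j _ => hX j

/-- For a strongly mixing sequence, the characteristic function of the normalized partial sum
factors asymptotically into those of an initial block and of the remainder. -/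
lemma tendsto_charFun_sub_mul {Ω : Type*} [MeasurableSpace Ω] {d : ℕ}
    {P : Measure Ω} [IsProbabilityMeasure P] {X : ℕ → Ω → (Fin d → ℝ)}
    (hX : ∀ j, Measurable (X j)) {A : ℕ → Matrix (Fin d) (Fin d) ℝ} (hA : ∀ n, IsUnit (A n))
    (b : ℕ → Fin d → ℝ) (hmix : StronglyMixing P X) (hinf : Infinitesimal P A X)
    {n m : ℕ → ℕ} (hn : Tendsto n atTop atTop) (hm : ∀ k, 1 ≤ m k ∧ m k ≤ n k)
    (L : StrongDual ℝ (Fin d → ℝ)) :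
    let Y : ℕ → Ω → (Fin d → ℝ) := fun i ω => (A i).mulVec (partialSum X i ω) + b i
    let U : ℕ → Ω → (Fin d → ℝ) := fun k ω => (A (n k) * (A (m k))⁻¹).mulVec (Y (m k) ω)
    Tendsto (fun k => (∫ ω, Complex.exp (L (Y (n k) ω) * Complex.I) ∂P) -
      (∫ ω, Complex.exp (L (U k ω) * Complex.I) ∂P) *
        ∫ ω, Complex.exp (L (Y (n k) ω - U k ω) * Complex.I) ∂P) atTop (𝓝 0) := by
  intro Y U
  rw [Metric.tendsto_atTop]
  intro ε hε
  obtain ⟨q, hq⟩ := ((Metric.tendsto_atTop.mp hmix) (ε / 32) (by positivity))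
  replace hq : alphaMix P X q < ε / 32 := by
    have := hq q le_rfl
    rw [Real.dist_eq, sub_zero] at this
    exact lt_of_abs_lt this
  set η : ℝ := ε / (4 * (q + 1)) with hη_def
  have hη : 0 < η := by positivity
  obtain ⟨N, hN⟩ := hinf.exists_integral_norm_exp_sub_one_le hX L hη
  obtain ⟨K, hK⟩ := (tendsto_atTop.mp hn N).exists_forall_of_atTop
  refine ⟨K, fun k hk => ?_⟩
  obtain ⟨hm1, hmn⟩ := hm k
  set near := (Finset.Ioc (m k) (n k)).filter (· < m k + q) with hnear
  set far := (Finset.Ioc (m k) (n k)).filter (¬ · < m k + q) with hfar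
  set c : Fin d → ℝ := b (n k) - (A (n k) * (A (m k))⁻¹).mulVec (b (m k)) with hc
  have hsplit : ∀ ω, Y (n k) ω - U k ω =
      (A (n k)).mulVec (∑ j ∈ near, X j ω) + ((A (n k)).mulVec (∑ j ∈ far, X j ω) + c) := by
    intro ω
    have hsum : partialSum X (n k) ω = partialSum X (m k) ω +
        (∑ j ∈ near, X j ω + ∑ j ∈ far, X j ω) := by
      rw [hnear, hfar, Finset.sum_filter_add_sum_filter_not, partialSum, partialSum]
      have hdisj : Disjoint (Finset.Icc 1 (m k)) (Finset.Ioc (m k) (n k)) := by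
        rw [Finset.disjoint_left]
        intro i hi hi'
        simp only [Finset.mem_Icc, Finset.mem_Ioc] at hi hi'
        omega
      rw [← Finset.sum_union hdisj]
      congr 1
      ext i
      simp only [Finset.mem_union, Finset.mem_Icc, Finset.mem_Ioc]
      omega
    have hcancel : (A (n k) * (A (m k))⁻¹).mulVec ((A (m k)).mulVec (partialSum X (m k) ω)) =
        (A (n k)).mulVec (partialSum X (m k) ω) := by
      rw [Matrix.mulVec_mulVec, Matrix.nonsing_inv_mul_cancel_right]
      exact (Matrix.isUnit_iff_isUnit_det _).mp (hA _)
    simp only [Y, U]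
    rw [Matrix.mulVec_add, hcancel, hsum, Matrix.mulVec_add, Matrix.mulVec_add, hc]
    abel
  have hu : Measurable[⨆ i ∈ Set.Icc 1 (m k), MeasurableSpace.comap (X i) inferInstance]
      (fun ω => L (U k ω)) := by
    have hcont : Continuous fun x => L ((A (n k) * (A (m k))⁻¹).mulVec
      ((A (m k)).mulVec x + b (m k))) := by fun_prop
    exact hcont.measurable.comp (measurable_sum_iSup_comap X (Finset.Icc 1 (m k)) _
      fun i hi => by simpa using hi)
  have hv : Measurable[⨆ i ∈ Set.Ici (m k + q), MeasurableSpace.comap (X i) inferInstance]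
      (fun ω => L ((A (n k)).mulVec (∑ j ∈ far, X j ω) + c)) := by
    have hcont : Continuous fun x => L ((A (n k)).mulVec x + c) := by fun_prop
    exact hcont.measurable.comp (measurable_sum_iSup_comap X far _
      fun i hi => by simpa using (Finset.mem_filter.mp hi).2)
  have hterm : ∀ j, Measurable fun ω => L ((A (n k)).mulVec (X j ω)) := fun j => by
    have hcont : Continuous fun x => L ((A (n k)).mulVec x) := by fun_prop
    exact hcont.measurable.comp (hX j)
  have hwsum : ∀ ω, L ((A (n k)).mulVec (∑ j ∈ near, X j ω)) =
      ∑ j ∈ near, L ((A (n k)).mulVec (X j ω)) := fun ω => by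
    rw [← Matrix.mulVecLin_apply, map_sum, map_sum]
    rfl
  have hw : Measurable fun ω => L ((A (n k)).mulVec (∑ j ∈ near, X j ω)) := by
    simp only [hwsum]
    exact Finset.measurable_sum _ fun j _ => hterm j
  have hcard : (near.card : ℝ) ≤ q := by
    have : near ⊆ Finset.Ico (m k) (m k + q) := fun i hi => by
      simp only [hnear, Finset.mem_filter, Finset.mem_Ioc, Finset.mem_Ico] at hi ⊢
      omega
    have := Finset.card_le_card this
    rw [Nat.card_Ico, Nat.add_sub_cancel_left] at this
    exact_mod_cast this
  have hwsmall : ∫ ω, ‖Complex.exp (L ((A (n k)).mulVec (∑ j ∈ near, X j ω)) * Complex.I) - 1‖ ∂P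
      ≤ q * η := by
    have hint : ∀ j, Integrable
        (fun ω => ‖Complex.exp (L ((A (n k)).mulVec (X j ω)) * Complex.I) - 1‖) P := fun j =>
      ((integrable_exp_ofReal_mul_I (hterm j)).sub (integrable_const _)).norm
    calc _ ≤ ∫ ω, ∑ j ∈ near,
          ‖Complex.exp (L ((A (n k)).mulVec (X j ω)) * Complex.I) - 1‖ ∂P := by
          refine integral_mono ((integrable_exp_ofReal_mul_I hw).sub (integrable_const _)).norm
            (integrable_finsetSum _ fun j _ => hint j) fun ω => ?_
          simp only [hwsum]
          exact norm_exp_sum_mul_I_sub_one_le _ _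
      _ = ∑ j ∈ near, ∫ ω,
          ‖Complex.exp (L ((A (n k)).mulVec (X j ω)) * Complex.I) - 1‖ ∂P :=
          integral_finsetSum _ fun j _ => hint j
      _ ≤ ∑ j ∈ near, η := by
          refine Finset.sum_le_sum fun j hj => ?_
          simp only [hnear, Finset.mem_filter, Finset.mem_Ioc] at hj
          exact hN _ (hK k hk) j (by omega) hj.1.2
      _ ≤ q * η := by
          rw [Finset.sum_const, nsmul_eq_mul]
          exact mul_le_mul_of_nonneg_right hcard hη.le
  have key := norm_integral_exp_add_add_sub_mul_le (iSup_comap_le hX _) (iSup_comap_le hX _)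
    (abs_measureReal_inter_sub_mul_le_alphaMix P X hm1 q) hu hw hv
  simp only [← map_add, ← hsplit, add_sub_cancel] at key
  rw [dist_zero_right]
  have hqη : 2 * (q * η) ≤ ε / 2 := by
    have : q * η ≤ (q + 1) * η := by nlinarith
    have h' : (q + 1) * η = ε / 4 := by rw [hη_def]; field_simp
    linarith
  linarith

/-- The limit point lies in the Urbanik semigroup when the block lengths tend to infinity. -/
lemma mem_urbanikD_of_tendsto_atTop {Ω : Type*} [MeasurableSpace Ω] {d : ℕ}
    {P : Measure Ω} [IsProbabilityMeasure P] {X : ℕ → Ω → (Fin d → ℝ)}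
    (hX : ∀ j, Measurable (X j)) {A : ℕ → Matrix (Fin d) (Fin d) ℝ} (hA : ∀ n, IsUnit (A n))
    {b : ℕ → Fin d → ℝ} {μ : Measure (Fin d → ℝ)} [IsProbabilityMeasure μ]
    (hmix : StronglyMixing P X) (hinf : Infinitesimal P A X)
    (hconv : WeakLim (fun n => P.map (fun ω => (A n).mulVec (partialSum X n ω) + b n)) μ)
    {n m : ℕ → ℕ} (hn : Tendsto n atTop atTop) (hm : ∀ k, 1 ≤ m k ∧ m k ≤ n k)
    (hm' : Tendsto m atTop atTop) {D : Matrix (Fin d) (Fin d) ℝ}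
    (hD : Tendsto (fun k => A (n k) * (A (m k))⁻¹) atTop (𝓝 D)) : D ∈ UrbanikD μ := by
  have hmeas : ∀ i, Measurable fun ω => (A i).mulVec (partialSum X i ω) + b i := fun i => by
    have hcont : Continuous fun x => (A i).mulVec x + b i := by fun_prop
    exact hcont.measurable.comp (measurable_partialSum hX i)
  have hY := hconv.tendstoInDistribution hmeas
  have hYn := hY.comp_tendsto hn
  have hg : Continuous fun p : (Fin d → ℝ) × (Fin d → Fin d → ℝ) => (Matrix.of p.2).mulVec p.1 := by
    refine Continuous.matrix_mulVec ?_ continuous_fst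
    exact continuous_snd
  have hU : TendstoInDistribution (fun k ω => (A (n k) * (A (m k))⁻¹).mulVec
      ((A (m k)).mulVec (partialSum X (m k) ω) + b (m k))) atTop (fun x => D.mulVec (id x))
      (fun _ => P) μ :=
    (hY.comp_tendsto hm').continuous_comp_prodMk_const hg
      (y := fun k => A (n k) * (A (m k))⁻¹) (c := D) hD
  obtain ⟨ν, ψ, hψ, hV⟩ := hYn.exists_subseq_tendstoInDistribution_sub hU
  have hDm : Measurable D.mulVec :=
    (show Continuous D.mulVec from continuous_const.matrix_mulVec continuous_id).measurable
  have : IsProbabilityMeasure (μ.map D.mulVec) := Measure.isProbabilityMeasure_map hDm.aemeasurable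
  refine ⟨ν, inferInstance, ?_⟩
  change μ = (μ.map D.mulVec) ∗ (ν : Measure _)
  refine Measure.ext_of_charFunDual (funext fun L => ?_)
  rw [charFunDual_conv]
  have h₁ := hYn.tendsto_integral_exp L |>.comp hψ.tendsto_atTop
  have h₂ := hU.tendsto_integral_exp L |>.comp hψ.tendsto_atTop
  have h₃ := hV.tendsto_integral_exp L
  have h₄ := (tendsto_charFun_sub_mul hX hA b hmix hinf hn hm L).comp hψ.tendsto_atTop
  have h₅ := tendsto_nhds_unique h₄ (h₁.sub (h₂.mul h₃))
  rw [Measure.map_id, Measure.map_id] at h₅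
  exact sub_eq_zero.mp h₅.symm

/-- Invertible norming matrices of an infinitesimal array with a full limit law can only
accumulate at `0`. -/
lemma eq_zero_of_tendsto_norming {Ω : Type*} [MeasurableSpace Ω] {d : ℕ}
    {P : Measure Ω} [IsProbabilityMeasure P] {X : ℕ → Ω → (Fin d → ℝ)}
    (hX : ∀ j, Measurable (X j)) {A : ℕ → Matrix (Fin d) (Fin d) ℝ} (hA : ∀ n, IsUnit (A n))
    {b : ℕ → Fin d → ℝ} {μ : Measure (Fin d → ℝ)} [IsProbabilityMeasure μ] (hfull : IsFull μ)
    (hinf : Infinitesimal P A X)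
    (hconv : WeakLim (fun n => P.map (fun ω => (A n).mulVec (partialSum X n ω) + b n)) μ)
    {n : ℕ → ℕ} (hn : Tendsto n atTop atTop) {B : Matrix (Fin d) (Fin d) ℝ}
    (hB : Tendsto (fun k => A (n k)) atTop (𝓝 B)) : B = 0 := by
  have hmeas : ∀ i, Measurable fun ω => (A i).mulVec (partialSum X i ω) + b i := fun i => by
    have hcont : Continuous fun x => (A i).mulVec x + b i := by fun_prop
    exact hcont.measurable.comp (measurable_partialSum hX i)
  have hBX : ∀ j, 1 ≤ j → ∀ᵐ ω ∂P, B.mulVec (X j ω) = 0 := by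
    intro j hj
    have h₁ : TendstoInMeasure P (fun k ω => (A (n k)).mulVec (X j ω)) atTop
        (fun ω => B.mulVec (X j ω)) := by
      refine tendstoInMeasure_of_tendsto_ae (fun k => ?_) (ae_of_all _ fun ω => ?_)
      · have hcont : Continuous fun x => (A (n k)).mulVec x := by fun_prop
        exact (hcont.measurable.comp (hX j)).aestronglyMeasurable
      · have hcont : Continuous fun M : Matrix (Fin d) (Fin d) ℝ => M.mulVec (X j ω) := by fun_prop
        exact (hcont.tendsto B).comp hB
    have h₂ : TendstoInMeasure P (fun k ω => (A (n k)).mulVec (X j ω)) atTop (fun _ => 0) := by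
      rw [tendstoInMeasure_iff_measureReal_norm]
      intro ε hε
      rw [Metric.tendsto_atTop]
      intro δ hδ
      obtain ⟨N, hN⟩ := hinf ε hε δ hδ
      obtain ⟨K, hK⟩ := (tendsto_atTop.mp hn (max N j)).exists_forall_of_atTop
      refine ⟨K, fun k hk => ?_⟩
      have := hK k hk
      rw [Real.dist_eq, sub_zero, abs_of_nonneg measureReal_nonneg]
      simpa only [sub_zero, Measure.real] using hN (n k) (le_trans (le_max_left _ _) this) j hj
        (le_trans (le_max_right _ _) this)
    exact tendstoInMeasure_ae_unique h₁ h₂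
  have hBS : ∀ i, ∀ᵐ ω ∂P, B.mulVec (partialSum X i ω) = 0 := by
    intro i
    have hall : ∀ᵐ ω ∂P, ∀ j, 1 ≤ j → B.mulVec (X j ω) = 0 :=
      ae_all_iff.mpr fun j => by
        by_cases hj : 1 ≤ j
        · filter_upwards [hBX j hj] with ω hω _ using hω
        · exact ae_of_all _ fun ω h => absurd h hj
    filter_upwards [hall] with ω hω
    rw [partialSum, ← Matrix.mulVecLin_apply, map_sum]
    exact Finset.sum_eq_zero fun j hj => hω j (Finset.mem_Icc.mp hj).1
  by_contra hB0
  obtain ⟨i, hi⟩ : ∃ i, B i ≠ 0 := by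
    by_contra hcon
    push Not at hcon
    exact hB0 (funext hcon)
  set v : ℕ → Fin d → ℝ := fun k => (B i) ᵥ* (A (n k))⁻¹ with hv
  have hvA : ∀ k, v k ᵥ* A (n k) = B i := fun k => by
    rw [hv, Matrix.vecMul_vecMul, Matrix.nonsing_inv_mul _
      ((Matrix.isUnit_iff_isUnit_det _).mp (hA _)), Matrix.vecMul_one]
  have hv0 : ∀ k, v k ≠ 0 := fun k h => hi (by rw [← hvA k, h, Matrix.zero_vecMul])
  have hsphere : ∀ k, ‖v k‖⁻¹ • v k ∈ Metric.sphere (0 : Fin d → ℝ) 1 := fun k => by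
    rw [mem_sphere_zero_iff_norm, norm_smul, norm_inv, norm_norm,
      inv_mul_cancel₀ (norm_ne_zero_iff.mpr (hv0 k))]
  obtain ⟨u, hu, ψ, hψ, hlim⟩ := (isCompact_sphere (0 : Fin d → ℝ) 1).isSeqCompact hsphere
  have hu0 : u ≠ 0 := by
    rintro rfl
    simp at hu
  have hg : Continuous fun p : (Fin d → ℝ) × (Fin d → ℝ) => p.2 ⬝ᵥ p.1 :=
    continuous_snd.dotProduct continuous_fst
  have hdist := ((hconv.tendstoInDistribution hmeas).comp_tendsto
    (hn.comp hψ.tendsto_atTop)).continuous_comp_prodMk_const hg hlim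
  obtain ⟨a, ha⟩ := hdist.exists_ae_eq_const
    (fun k => (‖v (ψ k)‖⁻¹ • v (ψ k)) ⬝ᵥ b (n (ψ k))) (fun k => by
      filter_upwards [hBS (n (ψ k))] with ω hω
      have hzero : v (ψ k) ⬝ᵥ (A (n (ψ k))).mulVec (partialSum X (n (ψ k)) ω) = 0 := by
        rw [Matrix.dotProduct_mulVec, hvA]
        exact congrFun hω i
      simp only [Function.comp_apply]
      rw [dotProduct_add, smul_dotProduct, hzero, smul_zero, zero_add])
  have huu : u ⬝ᵥ u ≠ 0 := fun h => hu0 (dotProduct_self_eq_zero.mp h)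
  let ℓ : (Fin d → ℝ) →ₗ[ℝ] ℝ := dotProductBilin ℝ ℝ u
  have hℓ : ∀ x, ℓ x = u ⬝ᵥ x := fun x => rfl
  have hker : LinearMap.ker ℓ ≠ ⊤ := fun h =>
    huu (by rw [← hℓ, ← LinearMap.mem_ker, h]; trivial)
  refine (hfull ((a / (u ⬝ᵥ u)) • u) (LinearMap.ker ℓ) hker).ne
    ((measure_congr (Filter.eventuallyEq_univ.mpr ?_)).trans measure_univ)
  filter_upwards [ha] with x hx
  rw [LinearMap.mem_ker, hℓ, dotProduct_sub, dotProduct_smul, smul_eq_mul, div_mul_cancel₀ _ huu]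
  exact sub_eq_zero.mpr hx

lemma zero_mem_urbanikD {d : ℕ} (μ : Measure (Fin d → ℝ)) [IsProbabilityMeasure μ] :
    (0 : Matrix (Fin d) (Fin d) ℝ) ∈ UrbanikD μ := by
  refine ⟨μ, inferInstance, ?_⟩
  have hmap : μ.map (0 : Matrix (Fin d) (Fin d) ℝ).mulVec = Measure.dirac 0 := by
    rw [show (0 : Matrix (Fin d) (Fin d) ℝ).mulVec = fun _ => 0 from funext Matrix.zero_mulVec,
      Measure.map_const, measure_univ, one_smul]
  rw [hmap]
  exact (Measure.dirac_zero_conv μ).symm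

/-- **Proposition 2 (second part).** Under strong mixing, infinitesimality and weak
convergence to a full law, with all `A_n` invertible, if `1 ≤ m_n ≤ n` then every limit
point of the sequence `(A_n A_{m_n}⁻¹)` belongs to `D(μ)`. -/
theorem limit_points_mem_urbanikD
    {d : ℕ} {Ω : Type*} [MeasurableSpace Ω] (P : Measure Ω) [IsProbabilityMeasure P]
    (X : ℕ → Ω → (Fin d → ℝ)) (hXmeas : ∀ j, Measurable (X j))
    (A : ℕ → Matrix (Fin d) (Fin d) ℝ) (hAinv : ∀ n, IsUnit (A n)) (b : ℕ → Fin d → ℝ)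
    (μ : Measure (Fin d → ℝ)) [IsProbabilityMeasure μ] (hfull : IsFull μ)
    (hmix : StronglyMixing P X)
    (hinf : Infinitesimal P A X)
    (hconv : WeakLim (fun n => P.map (fun ω => (A n).mulVec (partialSum X n ω) + b n)) μ)
    (m : ℕ → ℕ) (hm : ∀ n, 1 ≤ n → (1 ≤ m n ∧ m n ≤ n)) :
    ∀ D : Matrix (Fin d) (Fin d) ℝ,
      (∃ φ : ℕ → ℕ, StrictMono φ ∧
        Tendsto (fun k => A (φ k) * (A (m (φ k)))⁻¹) atTop (𝓝 D)) →
      D ∈ UrbanikD μ := by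
  rintro D ⟨φ, hφ, hD⟩
  by_cases hbdd : Tendsto (fun k => m (φ (k + 1))) atTop atTop
  · have hshift := tendsto_add_atTop_nat 1
    exact mem_urbanikD_of_tendsto_atTop hXmeas hAinv hmix hinf hconv
      (hφ.tendsto_atTop.comp hshift)
      (fun k => hm _ ((Nat.le_add_left 1 k).trans (hφ.le_apply))) hbdd (hD.comp hshift)
  · obtain ⟨M, ψ, hψ, hM⟩ : ∃ (M : ℕ) (ψ : ℕ → ℕ), StrictMono ψ ∧ ∀ k, m (φ (ψ k)) = M := by
      rw [tendsto_atTop] at hbdd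
      push Not at hbdd
      obtain ⟨R, hR⟩ := hbdd
      have hfreq : ∃ᶠ k in atTop, ∃ M ∈ Finset.range R, m (φ k) = M := by
        have : ∃ᶠ k in atTop, m (φ (k + 1)) < R := hR.mono fun k hk => by simpa using hk
        refine (tendsto_add_atTop_nat 1).frequently (this.mono fun k hk => ?_)
        exact ⟨_, Finset.mem_range.mpr hk, rfl⟩
      obtain ⟨M, hM⟩ : ∃ M, ∃ᶠ k in atTop, m (φ k) = M := by
        by_contra hcon
        push Not at hcon
        refine hfreq ?_
        have := (Filter.eventually_all_finset (Finset.range R)).mpr fun M _ => hcon M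
        filter_upwards [this] with k hk
        rintro ⟨M, hM, hMk⟩
        exact hk M hM hMk
      obtain ⟨ψ, hψ, h⟩ := extraction_of_frequently_atTop hM
      exact ⟨M, ψ, hψ, h⟩
    have hdet := (Matrix.isUnit_iff_isUnit_det _).mp (hAinv M)
    have hlim : Tendsto (fun k => A (φ (ψ k))) atTop (𝓝 (D * A M)) := by
      refine ((hD.comp hψ.tendsto_atTop).mul_const (A M)).congr fun k => ?_
      simp only [Function.comp_apply, hM]
      exact Matrix.nonsing_inv_mul_cancel_right _ _ hdet
    have hzero := eq_zero_of_tendsto_norming hXmeas hAinv hfull hinf hconv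
      (hφ.tendsto_atTop.comp hψ.tendsto_atTop) hlim
    have hD0 : D = 0 := by
      rw [← Matrix.mul_nonsing_inv_cancel_right (A M) D hdet, hzero, Matrix.zero_mul]
    rw [hD0]
    exact zero_mem_urbanikD μ
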